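/- arXiv:1506.06932 — 2 statements merged into one kernel-verified Lean document; each statement's English description precedes it below -/
import Mathlib

section
/- Assume Δt > 0 satisfies Δt·Φ(λ_min(B)) < 2α and Δt·Φ(λ_max(B)) < 2α. Then every complex eigenvalue μ of M = I − Δt (I + τΔt B)⁻¹ A satisfies |μ| < 1; that is, the RSS scheme is stable. -/
open Matrix

/-- The operator norm of a matrix, induced by the Euclidean norm. -/
noncomputable def mopNorm {N : ℕ} (C : Matrix (Fin N) (Fin N) ℝ) : ℝ :=
  ‖LinearMap.toContinuousLinearMap (Matrix.toEuclideanLin C)‖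

lemma rss_rayleigh {N : ℕ} (B : Matrix (Fin N) (Fin N) ℝ) (hB : B.IsHermitian)
    (x : Fin N → ℝ) :
    ∃ w : Fin N → ℝ, x ⬝ᵥ x = ∑ i, w i ^ 2 ∧
      B.mulVec x ⬝ᵥ x = ∑ i, hB.eigenvalues i * w i ^ 2 := by
  have key : ∀ z : Fin N → ℝ, z ⬝ᵥ x = ∑ i, (z ⬝ᵥ ⇑(hB.eigenvectorBasis i)) *
      (x ⬝ᵥ ⇑(hB.eigenvectorBasis i)) := by
    intro z
    have h := hB.eigenvectorBasis.sum_inner_mul_inner (WithLp.toLp 2 z) (WithLp.toLp 2 x)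
    simp only [EuclideanSpace.inner_eq_star_dotProduct, star_trivial] at h
    rw [dotProduct_comm, ← h]
    refine Finset.sum_congr rfl fun i _ => ?_
    rw [dotProduct_comm z]
  refine ⟨fun i => x ⬝ᵥ ⇑(hB.eigenvectorBasis i), ?_, ?_⟩
  · rw [key x]
    exact Finset.sum_congr rfl fun i _ => by ring
  · rw [key]
    refine Finset.sum_congr rfl fun i _ => ?_
    have hT : Bᵀ = B := by simpa [Matrix.IsHermitian] using hB
    have : B.mulVec x ⬝ᵥ ⇑(hB.eigenvectorBasis i) =
        hB.eigenvalues i * (x ⬝ᵥ ⇑(hB.eigenvectorBasis i)) := by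
      rw [← vecMul_transpose, hT, ← dotProduct_mulVec, hB.mulVec_eigenvectorBasis,
        dotProduct_smul, smul_eq_mul]
    rw [this]; ring

lemma rss_rayleigh_bounds {N : ℕ} (B : Matrix (Fin N) (Fin N) ℝ) (hB : B.IsHermitian)
    (x : Fin N → ℝ) :
    (⨅ i, hB.eigenvalues i) * (x ⬝ᵥ x) ≤ B.mulVec x ⬝ᵥ x ∧
      B.mulVec x ⬝ᵥ x ≤ (⨆ i, hB.eigenvalues i) * (x ⬝ᵥ x) := by
  obtain ⟨w, h1, h2⟩ := rss_rayleigh B hB x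
  rw [h1, h2, Finset.mul_sum, Finset.mul_sum]
  constructor
  · exact Finset.sum_le_sum fun i _ => mul_le_mul_of_nonneg_right
      (ciInf_le (Set.finite_range _).bddBelow i) (sq_nonneg _)
  · exact Finset.sum_le_sum fun i _ => mul_le_mul_of_nonneg_right
      (le_ciSup (Set.finite_range _).bddAbove i) (sq_nonneg _)

lemma rss_opnorm {N : ℕ} (C : Matrix (Fin N) (Fin N) ℝ) (x y : Fin N → ℝ) :
    4 * (y ⬝ᵥ C.mulVec x) ^ 2 ≤ mopNorm C ^ 2 * (x ⬝ᵥ x + y ⬝ᵥ y) ^ 2 := by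
  have h1 := abs_real_inner_le_norm (WithLp.toLp 2 y)
    (LinearMap.toContinuousLinearMap (Matrix.toEuclideanLin C) (WithLp.toLp 2 x))
  have h2 := (LinearMap.toContinuousLinearMap (Matrix.toEuclideanLin C)).le_opNorm
    (WithLp.toLp 2 x)
  have hn : ∀ z : Fin N → ℝ, z ⬝ᵥ z = ‖(WithLp.toLp 2 z : EuclideanSpace ℝ (Fin N))‖ ^ 2 := by
    intro z
    rw [← real_inner_self_eq_norm_sq, EuclideanSpace.inner_eq_star_dotProduct]
    simp
  have hi : inner ℝ (WithLp.toLp 2 y : EuclideanSpace ℝ (Fin N))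
      (LinearMap.toContinuousLinearMap (Matrix.toEuclideanLin C) (WithLp.toLp 2 x)) =
      y ⬝ᵥ C.mulVec x := by
    rw [EuclideanSpace.inner_eq_star_dotProduct, dotProduct_comm]
    simp
  rw [hi] at h1
  rw [hn x, hn y]
  change _ ≤ mopNorm C * _ at h2
  have hd : 0 ≤ mopNorm C := norm_nonneg _
  set X := ‖(WithLp.toLp 2 x : EuclideanSpace ℝ (Fin N))‖
  set Y := ‖(WithLp.toLp 2 y : EuclideanSpace ℝ (Fin N))‖
  have hX : 0 ≤ X := norm_nonneg _
  have hY : 0 ≤ Y := norm_nonneg _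
  have h3 : |y ⬝ᵥ C.mulVec x| ≤ Y * (mopNorm C * X) :=
    h1.trans (mul_le_mul_of_nonneg_left h2 hY)
  have h4 : 2 * |y ⬝ᵥ C.mulVec x| ≤ mopNorm C * (X ^ 2 + Y ^ 2) := by
    nlinarith [mul_nonneg hd (sq_nonneg (X - Y))]
  have h5 := pow_le_pow_left₀ (by positivity) h4 2
  rw [mul_pow, mul_pow, sq_abs] at h5
  linarith

lemma rss_scalar (c d α Δt l L ξ : ℝ) (hl : 0 < l) (h1 : l ≤ ξ) (h2 : ξ ≤ L)
    (hΔt : 0 < Δt) (hα : 0 < α)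
    (hmin : Δt * (c * l + d ^ 2 / (4 * l)) < 2 * α)
    (hmax : Δt * (c * L + d ^ 2 / (4 * L)) < 2 * α) :
    Δt * (c * ξ ^ 2 + d ^ 2 / 4) < 2 * α * ξ := by
  have hξ : 0 < ξ := hl.trans_le h1
  have hL : 0 < L := hξ.trans_le h2
  have e : ∀ z : ℝ, 0 < z → Δt * (c * z + d ^ 2 / (4 * z)) < 2 * α →
      Δt * (c * z ^ 2 + d ^ 2 / 4) < 2 * α * z := by
    intro z hz h
    have := mul_lt_mul_of_pos_right h hz
    have e : Δt * (c * z + d ^ 2 / (4 * z)) * z = Δt * (c * z ^ 2 + d ^ 2 / 4) := by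
      field_simp
    linarith
  rcases le_total 0 c with hc | hc
  · have a1 := e l hl hmin
    have a2 := e L hL hmax
    rcases eq_or_lt_of_le (h1.trans h2) with h | h
    · have : ξ = l := by linarith
      rw [this]; exact a1
    · have p : 0 ≤ Δt * c * ((ξ - l) * (L - ξ)) :=
        mul_nonneg (by positivity) (mul_nonneg (by linarith) (by linarith))
      by_contra hcon
      push Not at hcon
      have hLl : 0 < L - l := by linarith
      rcases eq_or_lt_of_le h1 with h' | h'
      · rw [← h'] at hcon; linarith
      · have b1 := mul_lt_mul_of_pos_left a2 (sub_pos.2 h')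
        have b2 := mul_le_mul_of_nonneg_left a1.le (sub_nonneg.2 h2)
        have b3 := mul_le_mul_of_nonneg_left hcon hLl.le
        nlinarith [mul_nonneg p hLl.le]
  · apply e ξ hξ
    refine lt_of_le_of_lt ?_ hmin
    apply mul_le_mul_of_nonneg_left _ hΔt.le
    have : d ^ 2 / (4 * ξ) ≤ d ^ 2 / (4 * l) := by gcongr
    nlinarith

/-- general stability of RSS for a nonsymmetric positive definite
matrix `A`. With `δ = ‖A − Aᵀ‖` and `Φ(ξ) = (β² − 2ατ)ξ + δ²/(4ξ)`, if
`Δt·Φ(λ_min(B)) < 2α` and `Δt·Φ(λ_max(B)) < 2α`, then every complex eigenvalue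
`μ` of `M = I − Δt (I + τΔt B)⁻¹ A` satisfies `|μ| < 1`. -/
theorem rss_general_stability_nonsymmetric
    {N : ℕ} (hN : 0 < N) (A B : Matrix (Fin N) (Fin N) ℝ)
    (hApos : ∀ u : Fin N → ℝ, u ≠ 0 → 0 < A.mulVec u ⬝ᵥ u)
    (hB : B.PosDef)
    (α β : ℝ) (hα : 0 < α) (hαβ : α ≤ β)
    (hlow : ∀ u : Fin N → ℝ, α * (B.mulVec u ⬝ᵥ u) ≤ A.mulVec u ⬝ᵥ u)
    (hup : ∀ u : Fin N → ℝ, A.mulVec u ⬝ᵥ u ≤ β * (B.mulVec u ⬝ᵥ u))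
    (τ Δt : ℝ) (hτ : 0 < τ) (hΔt : 0 < Δt)
    (hmin : Δt * ((β ^ 2 - 2 * α * τ) * (⨅ i, hB.1.eigenvalues i) +
        (mopNorm (A - Aᵀ)) ^ 2 / (4 * (⨅ i, hB.1.eigenvalues i))) < 2 * α)
    (hmax : Δt * ((β ^ 2 - 2 * α * τ) * (⨆ i, hB.1.eigenvalues i) +
        (mopNorm (A - Aᵀ)) ^ 2 / (4 * (⨆ i, hB.1.eigenvalues i))) < 2 * α) :
    ∀ (μ : ℂ) (v : Fin N → ℂ), v ≠ 0 →
      (((1 : Matrix (Fin N) (Fin N) ℝ) -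
          Δt • (((1 : Matrix (Fin N) (Fin N) ℝ) + (τ * Δt) • B)⁻¹ * A)).map
        (Complex.ofReal ·)).mulVec v = μ • v →
      ‖μ‖ < 1 := by
  intro μ v hv hMv
  set K : Matrix (Fin N) (Fin N) ℝ := 1 + (τ * Δt) • B with hK
  have hKpd : K.PosDef := Matrix.PosDef.one.add (hB.smul (by positivity))
  have hKdet : IsUnit K.det := (Matrix.isUnit_iff_isUnit_det _).1 hKpd.isUnit
  set M := (1 : Matrix (Fin N) (Fin N) ℝ) - Δt • (K⁻¹ * A) with hM
  have hKM : K * M = K - Δt • A := by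
    rw [hM, mul_sub, mul_one, mul_smul_comm, Matrix.mul_nonsing_inv_cancel_left _ _ hKdet]
  let x : Fin N → ℝ := fun i => (v i).re
  let y : Fin N → ℝ := fun i => (v i).im
  have hx : M.mulVec x = μ.re • x - μ.im • y := by
    funext i
    have := congrArg Complex.re (congrFun hMv i)
    simpa [Matrix.mulVec, dotProduct, x, y] using this
  have hy : M.mulVec y = μ.re • y + μ.im • x := by
    funext i
    have := congrArg Complex.im (congrFun hMv i)
    simpa [Matrix.mulVec, dotProduct, x, y] using this
  have hx2 : K.mulVec x - Δt • A.mulVec x = μ.re • K.mulVec x - μ.im • K.mulVec y := by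
    rw [← mulVec_smul K, ← mulVec_smul K, ← mulVec_sub, ← hx, mulVec_mulVec, hKM, sub_mulVec,
      smul_mulVec]
  have hy2 : K.mulVec y - Δt • A.mulVec y = μ.re • K.mulVec y + μ.im • K.mulVec x := by
    rw [← mulVec_smul K, ← mulVec_smul K, ← mulVec_add, ← hy, mulVec_mulVec, hKM, sub_mulVec,
      smul_mulVec]
  have hKT : Kᵀ = K := by simpa [Matrix.IsHermitian] using hKpd.1
  have hsym : K.mulVec y ⬝ᵥ x = K.mulVec x ⬝ᵥ y := by
    rw [← vecMul_transpose, hKT, ← dotProduct_mulVec, dotProduct_comm]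
  have e1 := congrArg (· ⬝ᵥ x) hx2
  have e2 := congrArg (· ⬝ᵥ y) hy2
  have e3 := congrArg (· ⬝ᵥ y) hx2
  have e4 := congrArg (· ⬝ᵥ x) hy2
  simp only [sub_dotProduct, add_dotProduct, smul_dotProduct, smul_eq_mul] at e1 e2 e3 e4
  rw [hsym] at e1 e4
  have hKz : ∀ z : Fin N → ℝ, K.mulVec z ⬝ᵥ z = z ⬝ᵥ z + τ * Δt * (B.mulVec z ⬝ᵥ z) := by
    intro z
    rw [hK, add_mulVec, one_mulVec, smul_mulVec, add_dotProduct, smul_dotProduct, smul_eq_mul]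
  have hs : y ⬝ᵥ (A - Aᵀ).mulVec x = A.mulVec x ⬝ᵥ y - A.mulVec y ⬝ᵥ x := by
    rw [sub_mulVec, dotProduct_sub, dotProduct_comm y, mulVec_transpose, ← vecMul_transpose A y,
      dotProduct_comm y, ← dotProduct_mulVec, vecMul_transpose, dotProduct_comm x]
  have hop := rss_opnorm (A - Aᵀ) x y
  rw [hs] at hop
  have hn : 0 < x ⬝ᵥ x + y ⬝ᵥ y := by
    have hx0 : 0 ≤ x ⬝ᵥ x := Finset.sum_nonneg fun i _ => mul_self_nonneg _
    have hy0 : 0 ≤ y ⬝ᵥ y := Finset.sum_nonneg fun i _ => mul_self_nonneg _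
    by_contra hcon
    have hx1 : x = 0 := dotProduct_self_eq_zero.1 (by linarith)
    have hy1 : y = 0 := dotProduct_self_eq_zero.1 (by linarith)
    exact hv (funext fun i => Complex.ext (congrFun hx1 i) (congrFun hy1 i))
  have hl : 0 < ⨅ i, hB.1.eigenvalues i := by
    haveI : Nonempty (Fin N) := ⟨⟨0, hN⟩⟩
    obtain ⟨i, hi⟩ := exists_eq_ciInf_of_finite (f := hB.1.eigenvalues)
    rw [← hi]; exact hB.eigenvalues_pos i
  have rx := rss_rayleigh_bounds B hB.1 x
  have ry := rss_rayleigh_bounds B hB.1 y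
  have lx := hlow x
  have ly := hlow y
  have ux := hup x
  have uy := hup y
  have kx := hKz x
  have ky := hKz y
  set l := ⨅ i, hB.1.eigenvalues i
  set L := ⨆ i, hB.1.eigenvalues i
  set d := mopNorm (A - Aᵀ)
  obtain ⟨n, hnn⟩ : ∃ n, n = x ⬝ᵥ x + y ⬝ᵥ y := ⟨_, rfl⟩
  obtain ⟨b, hb⟩ : ∃ b, b = B.mulVec x ⬝ᵥ x + B.mulVec y ⬝ᵥ y := ⟨_, rfl⟩
  obtain ⟨a, ha⟩ : ∃ a, a = A.mulVec x ⬝ᵥ x + A.mulVec y ⬝ᵥ y := ⟨_, rfl⟩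
  obtain ⟨s, hss⟩ : ∃ s, s = A.mulVec x ⬝ᵥ y - A.mulVec y ⬝ᵥ x := ⟨_, rfl⟩
  obtain ⟨k, hk⟩ : ∃ k, k = K.mulVec x ⬝ᵥ x + K.mulVec y ⬝ᵥ y := ⟨_, rfl⟩
  rw [← hnn] at hn
  rw [← hnn, ← hss] at hop
  have hkk : k = n + τ * Δt * b := by rw [hk, hnn, hb, kx, ky]; ring
  have E1 : (1 - μ.re) * k = Δt * a := by rw [hk, ha]; linarith
  have E2 : μ.im * k = Δt * s := by rw [hk, hss]; linarith
  have hlb : l * n ≤ b := by rw [hnn, hb]; linarith [rx.1, ry.1]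
  have hbL : b ≤ L * n := by rw [hnn, hb]; linarith [rx.2, ry.2]
  have hab : α * b ≤ a := by rw [ha, hb]; linarith
  have hab' : a ≤ β * b := by rw [ha, hb]; linarith
  have hbpos : 0 < b := (mul_pos hl hn).trans_le hlb
  have hsc := rss_scalar (β ^ 2 - 2 * α * τ) d α Δt l L (b / n) hl
    ((le_div_iff₀ hn).2 hlb) ((div_le_iff₀ hn).2 hbL) hΔt hα hmin hmax
  have hsc2 : Δt * ((β ^ 2 - 2 * α * τ) * b ^ 2 + d ^ 2 / 4 * n ^ 2) < 2 * α * b * n := by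
    have := mul_lt_mul_of_pos_right hsc (pow_pos hn 2)
    have e : Δt * ((β ^ 2 - 2 * α * τ) * (b / n) ^ 2 + d ^ 2 / 4) * n ^ 2 =
        Δt * ((β ^ 2 - 2 * α * τ) * b ^ 2 + d ^ 2 / 4 * n ^ 2) := by
      field_simp
    have e' : 2 * α * (b / n) * n ^ 2 = 2 * α * b * n := by field_simp
    linarith
  have hkpos : 0 < k := by rw [hkk]; positivity
  have hapos : 0 < a := (mul_pos hα hbpos).trans_le hab
  have ha2 : a ^ 2 ≤ β ^ 2 * b ^ 2 := by
    rw [← mul_pow]; exact pow_le_pow_left₀ hapos.le hab' 2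
  have hmain : Δt * (a ^ 2 + s ^ 2) < 2 * a * k := by
    have q1 : Δt * (a ^ 2 + s ^ 2) ≤ Δt * (β ^ 2 * b ^ 2 + d ^ 2 / 4 * n ^ 2) :=
      mul_le_mul_of_nonneg_left (by linarith) hΔt.le
    have q2 : α * b * k ≤ a * k := mul_le_mul_of_nonneg_right hab hkpos.le
    have q3 : α * b * k = α * b * n + α * τ * Δt * b ^ 2 := by rw [hkk]; ring
    linarith
  have hfin : (μ.re ^ 2 + μ.im ^ 2) * k ^ 2 < 1 * k ^ 2 := by
    have t1 : μ.re * k = k - Δt * a := by linarith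
    have t2 : (μ.re ^ 2 + μ.im ^ 2) * k ^ 2 = (k - Δt * a) ^ 2 + (Δt * s) ^ 2 := by
      rw [← t1, ← E2]; ring
    rw [t2]
    linarith [mul_lt_mul_of_pos_left hmain hΔt]
  have hlt := lt_of_mul_lt_mul_right hfin (by positivity)
  have hsq : ‖μ‖ ^ 2 < 1 := by
    rw [Complex.sq_norm, Complex.normSq_apply]; linarith
  exact (sq_lt_one_iff₀ (norm_nonneg _)).1 hsq
end

section
/- If τ ≥ β²/(2α) + δ²/(8α·λ_min(B)²), then for every Δt > 0, every complex eigenvalue μ of M = I − Δt (I + τΔt B)⁻¹ A satisfies |μ| < 1; that is, the RSS scheme is unconditionally stable. -/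
open Matrix

lemma rss_lam_bound {N : ℕ} (B : Matrix (Fin N) (Fin N) ℝ) (hB : B.IsHermitian)
    (x : Fin N → ℝ) : (⨅ i, hB.eigenvalues i) * (x ⬝ᵥ x) ≤ B.mulVec x ⬝ᵥ x := by
  set e := hB.eigenvectorBasis with he
  set X : EuclideanSpace ℝ (Fin N) := WithLp.toLp 2 x with hX
  have h1 : x ⬝ᵥ x = ∑ i, inner ℝ X (e i) * inner ℝ (e i) X := by
    rw [e.sum_inner_mul_inner]
    simp only [hX, EuclideanSpace.inner_eq_star_dotProduct, star_trivial]
  have h2 : B.mulVec x ⬝ᵥ x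
      = ∑ i, hB.eigenvalues i * (inner ℝ X (e i) * inner ℝ (e i) X) := by
    have : B.mulVec x ⬝ᵥ x = inner ℝ X (WithLp.toLp 2 (B.mulVec x)) := by
      simp only [hX, EuclideanSpace.inner_eq_star_dotProduct, star_trivial]
    rw [this, ← e.sum_inner_mul_inner]
    refine Finset.sum_congr rfl fun i _ => ?_
    have h3 : inner ℝ (e i) (WithLp.toLp 2 (B.mulVec x)) = hB.eigenvalues i * inner ℝ (e i) X := by
      have h4 := hB.mulVec_eigenvectorBasis i
      have hs : Bᵀ = B := by simpa using hB.eq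
      simp only [EuclideanSpace.inner_eq_star_dotProduct, hX, star_trivial]
      rw [dotProduct_comm, dotProduct_mulVec, ← mulVec_transpose, hs, h4, smul_dotProduct,
        dotProduct_comm, smul_eq_mul]
    rw [h3]; ring
  rw [h1, h2, Finset.mul_sum]
  refine Finset.sum_le_sum fun i _ => ?_
  refine mul_le_mul_of_nonneg_right (ciInf_le (Set.finite_range _).bddBelow i) ?_
  rw [real_inner_comm]; exact mul_self_nonneg _

lemma rss_op_bound {N : ℕ} (C : Matrix (Fin N) (Fin N) ℝ) (x y : Fin N → ℝ) :
    2 * |C.mulVec x ⬝ᵥ y| ≤ mopNorm C * (x ⬝ᵥ x + y ⬝ᵥ y) := by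
  set X : EuclideanSpace ℝ (Fin N) := WithLp.toLp 2 x with hX
  set Y : EuclideanSpace ℝ (Fin N) := WithLp.toLp 2 y with hY
  have hx : x ⬝ᵥ x = ‖X‖ ^ 2 := by
    rw [← real_inner_self_eq_norm_sq]; simp only [hX, EuclideanSpace.inner_eq_star_dotProduct, star_trivial]
  have hy : y ⬝ᵥ y = ‖Y‖ ^ 2 := by
    rw [← real_inner_self_eq_norm_sq]; simp only [hY, EuclideanSpace.inner_eq_star_dotProduct, star_trivial]
  have h0 : C.mulVec x ⬝ᵥ y
      = inner ℝ Y (LinearMap.toContinuousLinearMap (Matrix.toEuclideanLin C) X) := by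
    simp [hX, hY, EuclideanSpace.inner_eq_star_dotProduct]
  have h1 := abs_real_inner_le_norm Y (LinearMap.toContinuousLinearMap (Matrix.toEuclideanLin C) X)
  have h2 := (LinearMap.toContinuousLinearMap (Matrix.toEuclideanLin C)).le_opNorm X
  have h3 : 0 ≤ mopNorm C := norm_nonneg _
  change _ ≤ mopNorm C * _ at h2
  rw [hx, hy, h0]
  have h4 := mul_le_mul_of_nonneg_left h2 (norm_nonneg Y)
  nlinarith [mul_nonneg h3 (sq_nonneg (‖X‖ - ‖Y‖))]

set_option maxHeartbeats 1000000 in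
/-- unconditional stability of RSS for a nonsymmetric positive
definite matrix `A`. With `δ = ‖A − Aᵀ‖`, if
`τ ≥ β²/(2α) + δ²/(8α·λ_min(B)²)`, then for every `Δt > 0` every complex
eigenvalue `μ` of `M = I − Δt (I + τΔt B)⁻¹ A` satisfies `|μ| < 1`. -/
theorem rss_unconditional_stability_nonsymmetric
    {N : ℕ} (hN : 0 < N) (A B : Matrix (Fin N) (Fin N) ℝ)
    (hApos : ∀ u : Fin N → ℝ, u ≠ 0 → 0 < A.mulVec u ⬝ᵥ u)
    (hB : B.PosDef)
    (α β : ℝ) (hα : 0 < α) (hαβ : α ≤ β)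
    (hlow : ∀ u : Fin N → ℝ, α * (B.mulVec u ⬝ᵥ u) ≤ A.mulVec u ⬝ᵥ u)
    (hup : ∀ u : Fin N → ℝ, A.mulVec u ⬝ᵥ u ≤ β * (B.mulVec u ⬝ᵥ u))
    (τ : ℝ) (hτ : 0 < τ)
    (hτcond : β ^ 2 / (2 * α) +
        (mopNorm (A - Aᵀ)) ^ 2 / (8 * α * (⨅ i, hB.1.eigenvalues i) ^ 2) ≤ τ) :
    ∀ Δt : ℝ, 0 < Δt →
      ∀ (μ : ℂ) (v : Fin N → ℂ), v ≠ 0 →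
        (((1 : Matrix (Fin N) (Fin N) ℝ) -
            Δt • (((1 : Matrix (Fin N) (Fin N) ℝ) + (τ * Δt) • B)⁻¹ * A)).map
          (Complex.ofReal ·)).mulVec v = μ • v →
        ‖μ‖ < 1 := by
  intro Δt hΔ μ v hv hM
  set P : Matrix (Fin N) (Fin N) ℝ := 1 + (τ * Δt) • B with hP
  set K : Matrix (Fin N) (Fin N) ℝ := 1 - Δt • (P⁻¹ * A) with hK
  have hPpos : P.PosDef := Matrix.PosDef.one.add (hB.smul (mul_pos hτ hΔ))
  have hPu : IsUnit P.det := hPpos.det_pos.ne'.isUnit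
  set x : Fin N → ℝ := fun i => (v i).re with hx
  set y : Fin N → ℝ := fun i => (v i).im with hy
  have hKx : K.mulVec x = μ.re • x - μ.im • y := by
    funext i
    have := congrArg Complex.re (congrFun hM i)
    simpa [mulVec, dotProduct, hx, hy] using this
  have hKy : K.mulVec y = μ.im • x + μ.re • y := by
    funext i
    have := congrArg Complex.im (congrFun hM i)
    simp [mulVec, dotProduct] at this
    simp [mulVec, dotProduct, hx, hy]
    linarith
  have hPK : P * K = P - Δt • A := by
    rw [hK, mul_sub, mul_one, mul_smul_comm, Matrix.mul_nonsing_inv_cancel_left _ _ hPu]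
  have hA : Δt • A = P - P * K := by rw [hPK]; abel
  have hAx : Δt • A.mulVec x = (1 - μ.re) • P.mulVec x + μ.im • P.mulVec y := by
    rw [← smul_mulVec, hA, sub_mulVec, ← mulVec_mulVec, hKx, mulVec_sub, mulVec_smul, mulVec_smul]
    module
  have hAy : Δt • A.mulVec y = (-μ.im) • P.mulVec x + (1 - μ.re) • P.mulVec y := by
    rw [← smul_mulVec, hA, sub_mulVec, ← mulVec_mulVec, hKy, mulVec_add, mulVec_smul, mulVec_smul]
    module
  have hPs : P.mulVec x ⬝ᵥ y = P.mulVec y ⬝ᵥ x := by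
    have hs : Pᵀ = P := by simpa using hPpos.1.eq
    rw [dotProduct_comm, dotProduct_mulVec, ← mulVec_transpose, hs]
  have hPd : ∀ u : Fin N → ℝ, P.mulVec u ⬝ᵥ u = u ⬝ᵥ u + τ * Δt * (B.mulVec u ⬝ᵥ u) := by
    intro u
    rw [hP, add_mulVec, one_mulVec, smul_mulVec, add_dotProduct, smul_dotProduct, smul_eq_mul]
  have e1 := congrArg (· ⬝ᵥ x) hAx
  have e2 := congrArg (· ⬝ᵥ y) hAx
  have e3 := congrArg (· ⬝ᵥ x) hAy
  have e4 := congrArg (· ⬝ᵥ y) hAy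
  simp only [smul_dotProduct, add_dotProduct, smul_eq_mul] at e1 e2 e3 e4
  have hq := rss_op_bound (A - Aᵀ) x y
  have hAT : Aᵀ.mulVec x ⬝ᵥ y = A.mulVec y ⬝ᵥ x := by
    rw [mulVec_transpose, ← dotProduct_mulVec, dotProduct_comm]
  rw [sub_mulVec, sub_dotProduct, hAT] at hq
  have hlx := rss_lam_bound B hB.1 x
  have hly := rss_lam_bound B hB.1 y
  have hl : 0 < ⨅ i, hB.1.eigenvalues i := by
    have : Nonempty (Fin N) := ⟨⟨0, hN⟩⟩
    obtain ⟨i, hi⟩ := exists_eq_ciInf_of_finite (f := hB.1.eigenvalues)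
    rw [← hi]; exact hB.eigenvalues_pos i
  set l := ⨅ i, hB.1.eigenvalues i with hl'
  have hd : 0 ≤ mopNorm (A - Aᵀ) := norm_nonneg _
  set d := mopNorm (A - Aᵀ) with hd'
  have hxx : 0 ≤ x ⬝ᵥ x := by simpa using dotProduct_star_self_nonneg x
  have hyy : 0 ≤ y ⬝ᵥ y := by simpa using dotProduct_star_self_nonneg y
  have hn : 0 < x ⬝ᵥ x + y ⬝ᵥ y := by
    rcases (add_nonneg hxx hyy).lt_or_eq with h | h
    · exact h
    · exfalso
      have h1 : x = 0 := dotProduct_self_eq_zero.1 (by linarith)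
      have h2 : y = 0 := dotProduct_self_eq_zero.1 (by linarith)
      exact hv (funext fun i => Complex.ext (congrFun h1 i) (congrFun h2 i))
  have hpl := add_le_add (hlow x) (hlow y)
  have hpu := add_le_add (hup x) (hup y)
  rw [hPd] at e1 e4
  rw [hPs] at e2 e4
  rw [hPd] at e2 e3
  obtain ⟨n, hn'⟩ : ∃ n, n = x ⬝ᵥ x + y ⬝ᵥ y := ⟨_, rfl⟩
  obtain ⟨b, hb'⟩ : ∃ b, b = B.mulVec x ⬝ᵥ x + B.mulVec y ⬝ᵥ y := ⟨_, rfl⟩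
  obtain ⟨p, hp'⟩ : ∃ p, p = A.mulVec x ⬝ᵥ x + A.mulVec y ⬝ᵥ y := ⟨_, rfl⟩
  obtain ⟨q, hq'⟩ : ∃ q, q = A.mulVec x ⬝ᵥ y - A.mulVec y ⬝ᵥ x := ⟨_, rfl⟩
  have f1 : (1 - μ.re) * (n + τ * Δt * b) = Δt * p := by
    rw [hn', hb', hp']; linear_combination -e1 - e4
  have f2 : μ.im * (n + τ * Δt * b) = Δt * q := by
    rw [hn', hb', hq']; linear_combination -e2 + e3
  rw [← hn', ← hq'] at hq
  rw [← hn'] at hn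
  have hln : l * n ≤ b := by rw [hn', hb']; linarith
  have hpl : α * b ≤ p := by rw [hb', hp']; linarith
  have hpu : p ≤ β * b := by rw [hb', hp']; linarith
  clear e1 e2 e3 e4 hn' hb' hp' hq'
  have hb : 0 < b := (mul_pos hl hn).trans_le hln
  have hp : 0 < p := (mul_pos hα hb).trans_le hpl
  have hS : 0 < n + τ * Δt * b := by positivity
  have hq2 : q ^ 2 ≤ d ^ 2 / (4 * l ^ 2) * b ^ 2 := by
    have : |q| ≤ d / (2 * l) * b := by
      have h5 : d * n ≤ d * (b / l) :=
        mul_le_mul_of_nonneg_left ((le_div_iff₀ hl).2 (by linarith)) hd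
      have h6 : d / (2 * l) * b = d * (b / l) / 2 := by field_simp
      rw [h6]; linarith
    calc q ^ 2 = |q| ^ 2 := (sq_abs q).symm
      _ ≤ (d / (2 * l) * b) ^ 2 := pow_le_pow_left₀ (abs_nonneg q) this 2
      _ = _ := by field_simp; ring
  have hp2 : p ^ 2 ≤ β ^ 2 * b ^ 2 := by
    rw [← mul_pow]; exact pow_le_pow_left₀ hp.le hpu 2
  have hτ2 : β ^ 2 + d ^ 2 / (4 * l ^ 2) ≤ 2 * α * τ := by
    have h7 := mul_le_mul_of_nonneg_left hτcond (by positivity : 0 ≤ 2 * α)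
    refine le_trans (le_of_eq ?_) h7
    field_simp
    ring
  have key : p ^ 2 + q ^ 2 ≤ 2 * p * (τ * b) := by
    have h8 := mul_le_mul_of_nonneg_right hτ2 (sq_nonneg b)
    have h9 := mul_le_mul_of_nonneg_right hpl (mul_pos hτ hb).le
    nlinarith
  have key2 : Δt ^ 2 * (p ^ 2 + q ^ 2) < 2 * (Δt * p) * (n + τ * Δt * b) := by
    have h10 := mul_le_mul_of_nonneg_left key (sq_nonneg Δt)
    have h11 : 0 < Δt * p * n := by positivity
    nlinarith
  have key3 : (1 - μ.re) ^ 2 + μ.im ^ 2 < 2 * (1 - μ.re) := by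
    refine lt_of_mul_lt_mul_right ?_ (sq_nonneg (n + τ * Δt * b))
    calc ((1 - μ.re) ^ 2 + μ.im ^ 2) * (n + τ * Δt * b) ^ 2
        = ((1 - μ.re) * (n + τ * Δt * b)) ^ 2 + (μ.im * (n + τ * Δt * b)) ^ 2 := by ring
      _ = Δt ^ 2 * (p ^ 2 + q ^ 2) := by rw [f1, f2]; ring
      _ < 2 * (Δt * p) * (n + τ * Δt * b) := key2
      _ = _ := by rw [← f1]; ring
  have hsq : ‖μ‖ ^ 2 < 1 := by
    rw [Complex.sq_norm, Complex.normSq_apply]; linarith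
  exact (sq_lt_one_iff₀ (norm_nonneg μ)).1 hsq
end
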